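/- arXiv:2409.19936 — 4 statements merged into one kernel-verified Lean document; each statement's English description precedes it below -/
import Mathlib

section
/- Let F ∈ ℝ^{n×n}, G ∈ ℝ^{n×m}, let P, Q ∈ ℝ^{n×n} be symmetric with Q positive semidefinite, and let R ∈ ℝ^{m×m} be symmetric positive definite. Suppose P satisfies the continuous-time algebraic Riccati equation FᵀP + PF + Q − PGR⁻¹GᵀP = 0. Then for every η ∈ ℝⁿ, √((ηᵀ(FᵀP + PF)η)² + 4(ηᵀQη)(ηᵀPGR⁻¹GᵀPη)) = ηᵀ(Q + PGR⁻¹GᵀP)η. -/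
open Matrix

theorem posSemidef_mul_mul_mul_conjTranspose_mul {ι κ α : Type*} [Fintype ι] [Fintype κ]
    [Ring α] [PartialOrder α] [StarRing α] {P : Matrix ι ι α} {K : Matrix κ κ α}
    (hP : P.IsHermitian) (hK : K.PosSemidef) (G : Matrix ι κ α) :
    (P * G * K * Gᴴ * P).PosSemidef := by
  simpa only [conjTranspose_mul, hP.eq, Matrix.mul_assoc] using
    hK.mul_mul_conjTranspose_same (P * G)

theorem sqrt_sub_sq_add_four_mul (a b : ℝ) : √((b - a) ^ 2 + 4 * a * b) = |a + b| := by
  have hsq : (b - a) ^ 2 + 4 * a * b = (a + b) ^ 2 := by ring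
  rw [hsq, Real.sqrt_sq_eq_abs]

theorem decay_rate_simplification_general {ι : Type*} [Fintype ι] {A Q S : Matrix ι ι ℝ}
    (hRic : A + Q - S = 0) (η : ι → ℝ) :
    √((η ⬝ᵥ (A *ᵥ η)) ^ 2 + 4 * (η ⬝ᵥ (Q *ᵥ η)) * (η ⬝ᵥ (S *ᵥ η)))
      = |η ⬝ᵥ ((Q + S) *ᵥ η)| := by
  have hA : A = S - Q := eq_sub_of_add_eq (sub_eq_zero.mp hRic)
  rw [hA, sub_mulVec, add_mulVec, dotProduct_sub, dotProduct_add, sqrt_sub_sq_add_four_mul]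

/-- Simplification of the decay-rate function `W(η)` (Eq. (11) of the paper):
if `P` solves the continuous-time algebraic Riccati equation
`FᵀP + PF + Q − PGR⁻¹GᵀP = 0` with `Q ⪰ 0` and `R ≻ 0`, then for all `η`,
`√((ηᵀ(FᵀP+PF)η)² + 4(ηᵀQη)(ηᵀPGR⁻¹GᵀPη)) = ηᵀ(Q + PGR⁻¹GᵀP)η`. -/
theorem decay_rate_simplification
    {n m : ℕ}
    (F P Q : Matrix (Fin n) (Fin n) ℝ)
    (G : Matrix (Fin n) (Fin m) ℝ)
    (R : Matrix (Fin m) (Fin m) ℝ)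
    (hP : P.IsSymm) (hQsymm : Q.IsSymm) (hQ : Q.PosSemidef) (hR : R.PosDef)
    (hRic : Fᵀ * P + P * F + Q - P * G * R⁻¹ * Gᵀ * P = 0) :
    ∀ η : Fin n → ℝ,
      Real.sqrt ((η ⬝ᵥ ((Fᵀ * P + P * F) *ᵥ η)) ^ 2
          + 4 * (η ⬝ᵥ (Q *ᵥ η)) * (η ⬝ᵥ ((P * G * R⁻¹ * Gᵀ * P) *ᵥ η)))
        = η ⬝ᵥ ((Q + P * G * R⁻¹ * Gᵀ * P) *ᵥ η) := by
  intro η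
  have hS : (P * G * R⁻¹ * Gᵀ * P).PosSemidef := by
    simpa only [conjTranspose_eq_transpose_of_trivial] using
      posSemidef_mul_mul_mul_conjTranspose_mul
        (isHermitian_iff_isSymm.mpr hP) hR.posSemidef.inv G
  have hQS : 0 ≤ η ⬝ᵥ ((Q + P * G * R⁻¹ * Gᵀ * P) *ᵥ η) := by
    simpa only [star_trivial] using (hQ.add hS).dotProduct_mulVec_nonneg η
  rw [decay_rate_simplification_general hRic η, abs_of_nonneg hQS]
end

section
/- Let F ∈ ℝ^{n×n}, G ∈ ℝ^{n×m}, let P, Q ∈ ℝ^{n×n} be symmetric positive definite, and let R ∈ ℝ^{m×m} be symmetric positive definite, with FᵀP + PF + Q − PGR⁻¹GᵀP = 0. Then the closed-loop matrix A := F − GR⁻¹GᵀP is Hurwitz: every eigenvalue of A (as a complex matrix) has strictly negative real part. -/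
open Matrix

/-!
Put `A = F - G R⁻¹ Gᴴ P`. The Riccati equation is the Lyapunov equation
`Aᴴ P + P A = -(Q + P G R⁻¹ Gᴴ P)`, whose right-hand side is negative definite.
If `A v = μ v` with `v ≠ 0`, evaluating the quadratic forms at `v` gives
`2 (re μ) (v* P v) = -v* (Q + P G R⁻¹ Gᴴ P) v < 0`, and `v* P v ≥ 0` forces `re μ < 0`.
-/

open scoped ComplexOrder

section Definition

variable {𝕜 n : Type*} [CommSemiring 𝕜] [Algebra 𝕜 ℂ] [Fintype n] [DecidableEq n]

/-- A square matrix is Hurwitz if all its eigenvalues lie in the open left half-plane. The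
eigenvalues are always the complex ones, also when the entries of the matrix are real. -/
def IsHurwitz (A : Matrix n n 𝕜) : Prop :=
  ∀ μ : ℂ, μ ∈ spectrum ℂ (A.map (algebraMap 𝕜 ℂ)) → μ.re < 0

end Definition

section Eigenvectors

variable {n : Type*} [Fintype n]

theorem exists_mulVec_eq_smul_of_mem_spectrum {K : Type*} [Field K] [DecidableEq n]
    {A : Matrix n n K} {μ : K} (hμ : μ ∈ spectrum K A) : ∃ v ≠ 0, A *ᵥ v = μ • v := by
  rw [← spectrum_toLin', ← Module.End.hasEigenvalue_iff_mem_spectrum] at hμ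
  obtain ⟨v, hv⟩ := hμ.exists_hasEigenvector
  exact ⟨v, hv.2, by simpa only [toLin'_apply] using hv.apply_eq_smul⟩

theorem star_dotProduct_lyapunov_mulVec {R : Type*} [CommSemiring R] [StarRing R]
    {A : Matrix n n R} {μ : R} {v : n → R} (hv : A *ᵥ v = μ • v) (P : Matrix n n R) :
    star v ⬝ᵥ (Aᴴ * P + P * A) *ᵥ v = (μ + star μ) * (star v ⬝ᵥ P *ᵥ v) := by
  have left : star v ⬝ᵥ (Aᴴ * P) *ᵥ v = star μ * (star v ⬝ᵥ P *ᵥ v) := by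
    rw [← mulVec_mulVec, dotProduct_mulVec, ← star_mulVec, hv, star_smul, smul_dotProduct,
      smul_eq_mul]
  have right : star v ⬝ᵥ (P * A) *ᵥ v = μ * (star v ⬝ᵥ P *ᵥ v) := by
    rw [← mulVec_mulVec, hv, mulVec_smul, dotProduct_smul, smul_eq_mul]
  rw [add_mulVec, dotProduct_add, left, right]
  ring

end Eigenvectors

section ScalarExtension

variable {𝕜 𝕃 n : Type*} [RCLike 𝕜] [RCLike 𝕃] [Algebra 𝕜 𝕃] [StarModule 𝕜 𝕃] [Finite n]

theorem conjTranspose_map_algebraMap {R S m n : Type*} [CommSemiring R] [StarRing R]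
    [Semiring S] [StarRing S] [Algebra R S] [StarModule R S] (A : Matrix m n R) :
    Aᴴ.map (algebraMap R S) = (A.map (algebraMap R S))ᴴ :=
  conjTranspose_map _ algebraMap_star_comm

open scoped MatrixOrder in
theorem posSemidef_map_algebraMap {M : Matrix n n 𝕜} (hM : M.PosSemidef) :
    (M.map (algebraMap 𝕜 𝕃)).PosSemidef := by
  classical
  have := Fintype.ofFinite n
  obtain ⟨B, rfl⟩ := CStarAlgebra.nonneg_iff_eq_star_mul_self.mp hM.nonneg
  rw [star_eq_conjTranspose, Matrix.map_mul, conjTranspose_map_algebraMap]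
  exact posSemidef_conjTranspose_mul_self _

theorem posDef_map_algebraMap {M : Matrix n n 𝕜} (hM : M.PosDef) :
    (M.map (algebraMap 𝕜 𝕃)).PosDef := by
  classical
  have := Fintype.ofFinite n
  exact (posSemidef_map_algebraMap hM.posSemidef).posDef_iff_isUnit.mpr
    (hM.isUnit.map (algebraMap 𝕜 𝕃).mapMatrix)

end ScalarExtension

section Lyapunov

variable {𝕜 n : Type*} [RCLike 𝕜] [Fintype n] [DecidableEq n] {A P : Matrix n n 𝕜}

theorem re_lt_zero_of_mem_spectrum_of_lyapunov (hP : P.PosSemidef)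
    (hA : (-(Aᴴ * P + P * A)).PosDef) {μ : 𝕜} (hμ : μ ∈ spectrum 𝕜 A) : RCLike.re μ < 0 := by
  obtain ⟨v, hv_ne, hv⟩ := exists_mulVec_eq_smul_of_mem_spectrum hμ
  have form_nonneg : 0 ≤ RCLike.re (star v ⬝ᵥ P *ᵥ v) := hP.re_dotProduct_nonneg v
  have re_mul_form_neg : RCLike.re μ * RCLike.re (star v ⬝ᵥ P *ᵥ v) < 0 := by
    have decay_pos := hA.re_dotProduct_pos hv_ne
    rw [neg_mulVec, dotProduct_neg, star_dotProduct_lyapunov_mulVec hv, RCLike.star_def,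
      RCLike.add_conj, map_neg, mul_assoc, ← RCLike.ofReal_ofNat, RCLike.re_ofReal_mul,
      RCLike.re_ofReal_mul] at decay_pos
    linarith
  exact neg_of_mul_neg_left re_mul_form_neg form_nonneg

theorem isHurwitz_of_lyapunov [Algebra 𝕜 ℂ] [StarModule 𝕜 ℂ] (hP : P.PosSemidef)
    (hA : (-(Aᴴ * P + P * A)).PosDef) : IsHurwitz A := by
  intro μ hμ
  refine re_lt_zero_of_mem_spectrum_of_lyapunov (posSemidef_map_algebraMap hP) ?_ hμ
  rw [← conjTranspose_map_algebraMap, ← Matrix.map_mul, ← Matrix.map_mul,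
    ← Matrix.map_add _ (map_add _), ← Matrix.map_neg _ (map_neg _)]
  exact posDef_map_algebraMap hA

end Lyapunov

section Riccati

variable {n m : Type*} [Fintype n] [Fintype m] [DecidableEq m]

theorem neg_lyapunov_closed_loop_of_riccati {α : Type*} [CommRing α] [StarRing α]
    {F P Q : Matrix n n α} {G : Matrix n m α} {R : Matrix m m α}
    (hP : P.IsHermitian) (hR : R.IsHermitian)
    (hRic : Fᴴ * P + P * F + Q - P * G * R⁻¹ * Gᴴ * P = 0) :
    -((F - G * R⁻¹ * Gᴴ * P)ᴴ * P + P * (F - G * R⁻¹ * Gᴴ * P)) =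
      Q + P * G * R⁻¹ * Gᴴ * P := by
  have adjoint : (F - G * R⁻¹ * Gᴴ * P)ᴴ = Fᴴ - P * G * R⁻¹ * Gᴴ := by
    simp only [conjTranspose_sub, conjTranspose_mul, conjTranspose_conjTranspose, hP.eq,
      hR.inv.eq, Matrix.mul_assoc]
  rw [adjoint, ← sub_eq_zero, ← neg_eq_zero, ← hRic]
  simp only [Matrix.sub_mul, Matrix.mul_sub, Matrix.mul_assoc]
  abel

theorem posSemidef_riccati_quadratic_term {α : Type*} [CommRing α] [PartialOrder α] [StarRing α]
    {P : Matrix n n α} {R : Matrix m m α} (hP : P.IsHermitian) (hR : R.PosSemidef)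
    (G : Matrix n m α) : (P * G * R⁻¹ * Gᴴ * P).PosSemidef := by
  simpa only [conjTranspose_mul, hP.eq, Matrix.mul_assoc] using
    hR.inv.mul_mul_conjTranspose_same (P * G)

theorem riccati_closed_loop_hurwitz_general {𝕜 : Type*} [RCLike 𝕜] [Algebra 𝕜 ℂ]
    [StarModule 𝕜 ℂ] [DecidableEq n] {F P Q : Matrix n n 𝕜} {G : Matrix n m 𝕜}
    {R : Matrix m m 𝕜} (hP : P.PosSemidef) (hQ : Q.PosDef) (hR : R.PosDef)
    (hRic : Fᴴ * P + P * F + Q - P * G * R⁻¹ * Gᴴ * P = 0) :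
    IsHurwitz (F - G * R⁻¹ * Gᴴ * P) := by
  apply isHurwitz_of_lyapunov hP
  rw [neg_lyapunov_closed_loop_of_riccati hP.isHermitian hR.isHermitian hRic]
  exact hQ.add_posSemidef (posSemidef_riccati_quadratic_term hP.isHermitian hR.posSemidef G)

end Riccati

/-- The closed-loop matrix `A = F − GR⁻¹GᵀP` of the LQ feedback is Hurwitz:
if `P, Q ≻ 0`, `R ≻ 0` and `P` solves the continuous-time algebraic Riccati
equation `FᵀP + PF + Q − PGR⁻¹GᵀP = 0`, then every (complex) eigenvalue of
`A` has strictly negative real part. -/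
theorem riccati_closed_loop_hurwitz
    {n m : ℕ}
    (F P Q : Matrix (Fin n) (Fin n) ℝ)
    (G : Matrix (Fin n) (Fin m) ℝ)
    (R : Matrix (Fin m) (Fin m) ℝ)
    (hP : P.PosDef) (hPsymm : P.IsSymm)
    (hQ : Q.PosDef) (hQsymm : Q.IsSymm)
    (hR : R.PosDef) (hRsymm : R.IsSymm)
    (hRic : Fᵀ * P + P * F + Q - P * G * R⁻¹ * Gᵀ * P = 0) :
    ∀ μ : ℂ,
      μ ∈ spectrum ℂ ((F - G * R⁻¹ * Gᵀ * P).map (algebraMap ℝ ℂ)) →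
        μ.re < 0 := by
  simp only [← conjTranspose_eq_transpose_of_trivial] at hRic ⊢
  exact riccati_closed_loop_hurwitz_general hP.posSemidef hQ hR hRic
end

section
/- Let F ∈ ℝ^{n×n}, G ∈ ℝ^{n×m}, let P, Q ∈ ℝ^{n×n} be symmetric positive definite, and let R ∈ ℝ^{m×m} be symmetric positive definite, with FᵀP + PF + Q − PGR⁻¹GᵀP = 0. Set c := λ_min(Q)/λ_max(P), where λ_min(Q) is the smallest eigenvalue of Q and λ_max(P) the largest eigenvalue of P. Then every solution η : [0,∞) → ℝⁿ of η̇(t) = (F − GR⁻¹GᵀP)η(t) satisfies η(t)ᵀPη(t) ≤ e^{−ct}·(η(0)ᵀPη(0)) for all t ≥ 0; in particular η(t) → 0 exponentially. -/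
open Matrix Filter

/-!
In the Loewner order, the Riccati equation makes the closed-loop matrix `A = F - G R⁻¹ Gᴴ P` satisfy
`Aᴴ P + P A = -(Q + P G R⁻¹ Gᴴ P) ≤ -Q ≤ -λ_min(Q) ≤ -c P`. Since `V(η) = ηᴴ P η` has derivative
`ηᴴ (Aᴴ P + P A) η` along a solution, `V' ≤ -c V`, and Grönwall's inequality gives the decay of `V`.
Convergence of `η` follows from the coercivity `λ_min(P) |η|² ≤ V(η)`.
-/

open Set Topology

lemma le_exp_mul_of_hasDerivWithinAt_le {f f' : ℝ → ℝ} {K a : ℝ}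
    (hf : ∀ t, a ≤ t → HasDerivWithinAt f (f' t) (Ici a) t) (hf' : ∀ t, a ≤ t → f' t ≤ K * f t)
    {t : ℝ} (ht : a ≤ t) : f t ≤ Real.exp (K * (t - a)) * f a := by
  have hcont : ContinuousOn f (Icc a t) := fun s hs =>
    (hf s hs.1).continuousWithinAt.mono Icc_subset_Ici_self
  have hslope : ∀ s ∈ Ico a t, ∀ r, f' s < r → ∃ᶠ z in 𝓝[>] s, (z - s)⁻¹ * (f z - f s) < r :=
    fun s hs r hr => ((hf s hs.1).mono (Ici_subset_Ici.2 hs.1)).liminf_right_slope_le hr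
  have hbound := le_gronwallBound_of_liminf_deriv_right_le (ε := 0) hcont hslope le_rfl
    (fun s hs => by simpa using hf' s hs.1) t ⟨ht, le_rfl⟩
  rwa [gronwallBound_ε0, mul_comm] at hbound

section RCLike

open scoped ComplexOrder MatrixOrder

variable {𝕜 n m : Type*} [RCLike 𝕜] [Fintype n] [Fintype m]

section SpectralBounds

variable [DecidableEq n] {A : Matrix n n 𝕜}

lemma iInf_eigenvalues_smul_one_le (hA : A.IsHermitian) :
    (⨅ i, hA.eigenvalues i) • (1 : Matrix n n 𝕜) ≤ A := by
  rw [← Algebra.algebraMap_eq_smul_one]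
  refine algebraMap_le_of_le_spectrum (fun x hx => ?_) hA.isSelfAdjoint
  obtain ⟨i, rfl⟩ := hA.spectrum_real_eq_range_eigenvalues ▸ hx
  exact ciInf_le (finite_range _).bddBelow i

lemma le_iSup_eigenvalues_smul_one (hA : A.IsHermitian) :
    A ≤ (⨆ i, hA.eigenvalues i) • (1 : Matrix n n 𝕜) := by
  rw [← Algebra.algebraMap_eq_smul_one]
  refine le_algebraMap_of_spectrum_le (fun x hx => ?_) hA.isSelfAdjoint
  obtain ⟨i, rfl⟩ := hA.spectrum_real_eq_range_eigenvalues ▸ hx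
  exact le_ciSup (finite_range _).bddAbove i

lemma iInf_eigenvalues_pos [Nonempty n] (hA : A.PosDef) : 0 < ⨅ i, hA.1.eigenvalues i := by
  obtain ⟨i, hi⟩ := exists_eq_ciInf_of_finite (f := hA.1.eigenvalues)
  exact hi ▸ hA.eigenvalues_pos i

lemma iSup_eigenvalues_pos [Nonempty n] (hA : A.PosDef) : 0 < ⨆ i, hA.1.eigenvalues i :=
  (hA.eigenvalues_pos (Classical.arbitrary n)).trans_le (le_ciSup (finite_range _).bddAbove _)

lemma iInf_eigenvalues_div_iSup_smul_le [Nonempty n] {P Q : Matrix n n 𝕜} (hP : P.PosDef)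
    (hQ : Q.PosSemidef) :
    ((⨅ i, hQ.1.eigenvalues i) / ⨆ i, hP.1.eigenvalues i) • P ≤ Q := by
  have hmax := iSup_eigenvalues_pos hP
  have hmin : 0 ≤ ⨅ i, hQ.1.eigenvalues i := Real.iInf_nonneg hQ.eigenvalues_nonneg
  calc ((⨅ i, hQ.1.eigenvalues i) / ⨆ i, hP.1.eigenvalues i) • P
      ≤ ((⨅ i, hQ.1.eigenvalues i) / ⨆ i, hP.1.eigenvalues i) •
          (⨆ i, hP.1.eigenvalues i) • (1 : Matrix n n 𝕜) :=
        smul_le_smul_of_nonneg_left (le_iSup_eigenvalues_smul_one hP.1)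
          (div_nonneg hmin hmax.le)
    _ = (⨅ i, hQ.1.eigenvalues i) • (1 : Matrix n n 𝕜) := by
        rw [smul_smul, div_mul_cancel₀ _ hmax.ne']
    _ ≤ Q := iInf_eigenvalues_smul_one_le hQ.1

end SpectralBounds

/-- The quadratic Lyapunov function `V(x) = xᴴ P x`. Its values are made real by taking the real
part, which loses nothing when `P` is Hermitian. -/
def quadraticLyapunov (P : Matrix n n 𝕜) (x : n → 𝕜) : ℝ :=
  RCLike.re (star x ⬝ᵥ (P *ᵥ x))

namespace quadraticLyapunov

lemma smul_left (c : ℝ) (P : Matrix n n 𝕜) (x : n → 𝕜) :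
    quadraticLyapunov (c • P) x = c * quadraticLyapunov P x := by
  simp only [quadraticLyapunov, smul_mulVec, dotProduct_smul, RCLike.smul_re]

lemma one_left [DecidableEq n] (x : n → 𝕜) :
    quadraticLyapunov (1 : Matrix n n 𝕜) x = ∑ i, ‖x i‖ ^ 2 := by
  simp only [quadraticLyapunov, one_mulVec, dotProduct, Pi.star_apply, RCLike.star_def,
    RCLike.conj_mul, map_sum, ← RCLike.ofReal_pow, RCLike.ofReal_re]

lemma mono_left {P P' : Matrix n n 𝕜} (h : P ≤ P') (x : n → 𝕜) :
    quadraticLyapunov P x ≤ quadraticLyapunov P' x := by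
  have hnonneg := (le_iff.1 h).re_dotProduct_nonneg x
  rwa [sub_mulVec, dotProduct_sub, map_sub, sub_nonneg] at hnonneg

lemma iInf_eigenvalues_mul_norm_sq_le [DecidableEq n] {P : Matrix n n 𝕜} (hP : P.PosSemidef)
    (x : n → 𝕜) (i : n) :
    (⨅ j, hP.1.eigenvalues j) * ‖x i‖ ^ 2 ≤ quadraticLyapunov P x := by
  calc (⨅ j, hP.1.eigenvalues j) * ‖x i‖ ^ 2
      ≤ (⨅ j, hP.1.eigenvalues j) * ∑ j, ‖x j‖ ^ 2 :=
        mul_le_mul_of_nonneg_left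
          (Finset.single_le_sum (f := fun j => ‖x j‖ ^ 2) (fun j _ => sq_nonneg _)
            (Finset.mem_univ i))
          (Real.iInf_nonneg hP.eigenvalues_nonneg)
    _ = quadraticLyapunov ((⨅ j, hP.1.eigenvalues j) • (1 : Matrix n n 𝕜)) x := by
        rw [smul_left, one_left]
    _ ≤ quadraticLyapunov P x := mono_left (iInf_eigenvalues_smul_one_le hP.1) x

lemma tendsto_zero_of_comp {α : Type*} {l : Filter α} {P : Matrix n n 𝕜} (hP : P.PosDef)
    {x : α → n → 𝕜} (hx : Tendsto (fun a => quadraticLyapunov P (x a)) l (𝓝 0)) :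
    Tendsto x l (𝓝 0) := by
  classical
  refine tendsto_pi_nhds.2 fun i => ?_
  have : Nonempty n := ⟨i⟩
  have hsq : Tendsto (fun a => ‖x a i‖ ^ 2) l (𝓝 0) := by
    refine squeeze_zero (fun a => sq_nonneg _) (fun a => ?_)
      (by simpa using hx.const_mul (⨅ j, hP.1.eigenvalues j)⁻¹)
    exact (le_inv_mul_iff₀ (iInf_eigenvalues_pos hP)).2
      (iInf_eigenvalues_mul_norm_sq_le hP.posSemidef (x a) i)
  exact tendsto_zero_iff_norm_tendsto_zero.2 (by simpa using hsq.sqrt)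

lemma hasDerivWithinAt_comp (P A : Matrix n n 𝕜) {η : ℝ → n → 𝕜} {s : Set ℝ} {t : ℝ}
    (hη : HasDerivWithinAt η (A *ᵥ η t) s t) :
    HasDerivWithinAt (fun u => quadraticLyapunov P (η u))
      (quadraticLyapunov (Aᴴ * P + P * A) (η t)) s t := by
  have hcoord := hasDerivWithinAt_pi.1 hη
  have hmulVec : ∀ i, HasDerivWithinAt (fun u => (P *ᵥ η u) i) ((P *ᵥ A *ᵥ η t) i) s t :=
    fun i => HasDerivWithinAt.fun_sum fun j _ => (hcoord j).const_mul (P i j)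
  have hdot : HasDerivWithinAt (fun u => star (η u) ⬝ᵥ (P *ᵥ η u))
      (star (A *ᵥ η t) ⬝ᵥ (P *ᵥ η t) + star (η t) ⬝ᵥ (P *ᵥ A *ᵥ η t)) s t := by
    simp only [dotProduct, ← Finset.sum_add_distrib]
    exact HasDerivWithinAt.fun_sum fun i _ => (hcoord i).star.mul (hmulVec i)
  have hadjoint : star (A *ᵥ η t) ⬝ᵥ (P *ᵥ η t) + star (η t) ⬝ᵥ (P *ᵥ A *ᵥ η t) =
      star (η t) ⬝ᵥ ((Aᴴ * P + P * A) *ᵥ η t) := by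
    rw [star_mulVec, ← dotProduct_mulVec, add_mulVec, dotProduct_add, mulVec_mulVec, mulVec_mulVec]
  rw [hadjoint] at hdot
  exact (RCLike.reCLM (K := 𝕜)).hasFDerivAt.comp_hasDerivWithinAt t hdot

lemma le_exp_mul_of_lyapunov_le {P A : Matrix n n 𝕜} {c : ℝ}
    (hPA : Aᴴ * P + P * A ≤ -c • P) {η : ℝ → n → 𝕜}
    (hη : ∀ t, 0 ≤ t → HasDerivWithinAt η (A *ᵥ η t) (Ici 0) t) {t : ℝ} (ht : 0 ≤ t) :
    quadraticLyapunov P (η t) ≤ Real.exp (-c * t) * quadraticLyapunov P (η 0) := by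
  have hdecay := le_exp_mul_of_hasDerivWithinAt_le
    (fun s hs => hasDerivWithinAt_comp P A (hη s hs))
    (fun s _ => (mono_left hPA (η s)).trans_eq (smul_left (-c) P (η s))) ht
  rwa [sub_zero] at hdecay

lemma tendsto_zero_of_lyapunov_le {P A : Matrix n n 𝕜} (hP : P.PosDef) {c : ℝ} (hc : 0 < c)
    (hPA : Aᴴ * P + P * A ≤ -c • P) {η : ℝ → n → 𝕜}
    (hη : ∀ t, 0 ≤ t → HasDerivWithinAt η (A *ᵥ η t) (Ici 0) t) : Tendsto η atTop (𝓝 0) := by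
  have hexp : Tendsto (fun t : ℝ => Real.exp (-c * t)) atTop (𝓝 0) :=
    Real.tendsto_exp_atBot.comp (tendsto_id.const_mul_atTop_of_neg (neg_lt_zero.2 hc))
  have hbound := hexp.mul_const (quadraticLyapunov P (η 0))
  rw [zero_mul] at hbound
  refine tendsto_zero_of_comp hP (squeeze_zero'
    (Eventually.of_forall fun t => hP.posSemidef.re_dotProduct_nonneg (η t)) ?_ hbound)
  filter_upwards [eventually_ge_atTop 0] with t ht using le_exp_mul_of_lyapunov_le hPA hη ht

end quadraticLyapunov

section Riccati

variable [DecidableEq m]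

/-- The closed-loop matrix `F - G R⁻¹ Gᴴ P` of `η̇ = F η + G μ` under the linear-quadratic
feedback `μ = -R⁻¹ Gᴴ P η`. -/
noncomputable def lqClosedLoop (F P : Matrix n n 𝕜) (G : Matrix n m 𝕜) (R : Matrix m m 𝕜) :
    Matrix n n 𝕜 :=
  F - G * R⁻¹ * Gᴴ * P

variable {F P Q : Matrix n n 𝕜} {G : Matrix n m 𝕜} {R : Matrix m m 𝕜}

lemma lqClosedLoop_lyapunov_eq (hP : P.IsHermitian) (hR : R.IsHermitian)
    (hRic : Fᴴ * P + P * F + Q - P * G * R⁻¹ * Gᴴ * P = 0) :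
    (lqClosedLoop F P G R)ᴴ * P + P * lqClosedLoop F P G R = -(Q + P * G * R⁻¹ * Gᴴ * P) := by
  rw [eq_neg_iff_add_eq_zero, ← hRic]
  simp only [lqClosedLoop, conjTranspose_sub, conjTranspose_mul, conjTranspose_conjTranspose,
    hR.inv.eq, hP.eq, Matrix.sub_mul, Matrix.mul_sub, Matrix.mul_assoc]
  abel

lemma lqClosedLoop_lyapunov_le (hP : P.IsHermitian) (hR : R.PosDef)
    (hRic : Fᴴ * P + P * F + Q - P * G * R⁻¹ * Gᴴ * P = 0) :
    (lqClosedLoop F P G R)ᴴ * P + P * lqClosedLoop F P G R ≤ -Q := by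
  have hfeedback : 0 ≤ P * G * R⁻¹ * Gᴴ * P := by
    have hpos := hR.inv.posSemidef.mul_mul_conjTranspose_same (P * G)
    rwa [conjTranspose_mul, hP.eq, ← Matrix.mul_assoc, ← nonneg_iff_posSemidef] at hpos
  rw [lqClosedLoop_lyapunov_eq hP hR.1 hRic]
  exact neg_le_neg (le_add_of_nonneg_right hfeedback)

theorem lq_closed_loop_exponential_decay_general [DecidableEq n] [Nonempty n]
    (hP : P.PosDef) (hQ : Q.PosDef) (hR : R.PosDef)
    (hRic : Fᴴ * P + P * F + Q - P * G * R⁻¹ * Gᴴ * P = 0) {c : ℝ}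
    (hc : c = (⨅ i, hQ.1.eigenvalues i) / ⨆ i, hP.1.eigenvalues i) {η : ℝ → n → 𝕜}
    (hη : ∀ t, 0 ≤ t → HasDerivWithinAt η (lqClosedLoop F P G R *ᵥ η t) (Ici 0) t) :
    (∀ t, 0 ≤ t →
        quadraticLyapunov P (η t) ≤ Real.exp (-c * t) * quadraticLyapunov P (η 0))
      ∧ Tendsto η atTop (𝓝 0) := by
  have hc_pos : 0 < c := hc ▸ div_pos (iInf_eigenvalues_pos hQ) (iSup_eigenvalues_pos hP)
  have hQP : c • P ≤ Q := hc ▸ iInf_eigenvalues_div_iSup_smul_le hP hQ.posSemidef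
  have hPA : (lqClosedLoop F P G R)ᴴ * P + P * lqClosedLoop F P G R ≤ -c • P := by
    rw [neg_smul]
    exact (lqClosedLoop_lyapunov_le hP.1 hR hRic).trans (neg_le_neg hQP)
  exact ⟨fun t => quadraticLyapunov.le_exp_mul_of_lyapunov_le hPA hη,
    quadraticLyapunov.tendsto_zero_of_lyapunov_le hP hc_pos hPA hη⟩

end Riccati

end RCLike

/-- Exponential decay of the Lyapunov function along the LQ closed loop:
if `P, Q ≻ 0`, `R ≻ 0`, `P` solves the Riccati equation
`FᵀP + PF + Q − PGR⁻¹GᵀP = 0`, and `c = λ_min(Q)/λ_max(P)`, then every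
solution of `η̇ = (F − GR⁻¹GᵀP)η` satisfies
`η(t)ᵀPη(t) ≤ e^{−ct} η(0)ᵀPη(0)` for all `t ≥ 0`; in particular
`η(t) → 0`. -/
theorem lq_closed_loop_exponential_decay
    {n m : ℕ} (hn : 0 < n)
    (F P Q : Matrix (Fin n) (Fin n) ℝ)
    (G : Matrix (Fin n) (Fin m) ℝ)
    (R : Matrix (Fin m) (Fin m) ℝ)
    (hP : P.PosDef) (hPsymm : P.IsSymm)
    (hQ : Q.PosDef) (hQsymm : Q.IsSymm)
    (hR : R.PosDef) (hRsymm : R.IsSymm)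
    (hRic : Fᵀ * P + P * F + Q - P * G * R⁻¹ * Gᵀ * P = 0)
    (c : ℝ)
    (hc : c = (⨅ i : Fin n, hQ.1.eigenvalues i) / (⨆ i : Fin n, hP.1.eigenvalues i))
    (η : ℝ → (Fin n → ℝ))
    (hη : ∀ t : ℝ, 0 ≤ t →
      HasDerivAt η ((F - G * R⁻¹ * Gᵀ * P) *ᵥ η t) t) :
    (∀ t : ℝ, 0 ≤ t →
        η t ⬝ᵥ (P *ᵥ η t) ≤ Real.exp (-c * t) * (η 0 ⬝ᵥ (P *ᵥ η 0)))
      ∧ Tendsto η atTop (nhds 0) := by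
  have : Nonempty (Fin n) := ⟨⟨0, hn⟩⟩
  -- Over `ℝ`, `star` and `RCLike.re` unfold to the identity.
  exact lq_closed_loop_exponential_decay_general hP hQ hR hRic hc
    fun t ht => (hη t ht).hasDerivWithinAt
end

section
/- Let f : ℝⁿ → ℝⁿ and g : ℝⁿ → ℝ^{n×m} be locally Lipschitz, let V : ℝⁿ → ℝ be continuously differentiable with V(0) = 0, V(x) > 0 for x ≠ 0, and V radially unbounded, let W : ℝⁿ → ℝ be continuous with W(0) = 0 and W(x) > 0 for x ≠ 0, and let ρ₀ > 0. Let u : [0,∞) → ℝᵐ be continuous and let x : [0,∞) → ℝⁿ solve ẋ(t) = f(x(t)) + g(x(t))u(t). If for all t ≥ 0, ∇V(x(t))ᵀ(f(x(t)) + g(x(t))u(t)) ≤ −ρ₀·W(x(t)) (i.e., the optimal-decay CLF constraint holds with slack δ = 0 and decay weight ρ ≥ ρ₀), then x(t) → 0 as t → ∞. -/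
open Matrix Filter

attribute [local instance] Matrix.normedAddCommGroup

/-!
`V` does not increase along the trajectory, so the trajectory stays in the compact sublevel set
`{V ≤ V (x 0)}`. On the compact shell `{ε ≤ V ≤ V (x 0)}`, which avoids the origin, `W` is bounded
below by some `c > 0`; while `V (x t) ≥ ε` the value of `V` falls at rate at least `ρ₀ * c`, which
is possible only for a finite time. Hence `V (x t) → 0`, and since `V` is positive definite and
proper this forces `x t → 0`.
-/

section Coercive

open Set Topology

theorem tendsto_cobounded_atTop_of_forall_norm_le {E : Type*} [SeminormedAddGroup E]
    {α : Type*} [Preorder α] {V : E → α} (h : ∀ M : α, ∃ r : ℝ, ∀ x, r ≤ ‖x‖ → M ≤ V x) :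
    Tendsto V (Bornology.cobounded E) atTop :=
  tendsto_atTop.2 fun M =>
    let ⟨r, hr⟩ := h M
    hasBasis_cobounded_norm.eventually_iff.2 ⟨r, trivial, fun x hx => hr x hx⟩

variable {X : Type*} [TopologicalSpace X]

theorem isCompact_preimage_Iic_of_tendsto_cocompact_atTop {α : Type*} [TopologicalSpace α]
    [LinearOrder α] [ClosedIicTopology α] [NoMaxOrder α] {V : X → α} (hV : Continuous V)
    (hV_atTop : Tendsto V (cocompact X) atTop) (b : α) : IsCompact (V ⁻¹' Iic b) := by
  obtain ⟨K, hK, hK_gt⟩ := mem_cocompact.1 (hV_atTop.eventually_gt_atTop b)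
  refine hK.of_isClosed_subset (isClosed_Iic.preimage hV) fun y hy => ?_
  by_contra hyK
  exact (hK_gt hyK).not_ge hy

theorem tendsto_nhds_of_tendsto_comp_nhds_zero {ι : Type*} {l : Filter ι} {V : X → ℝ} {x₀ : X}
    {x : ι → X} (hV : Continuous V) (hV_pos : ∀ y ≠ x₀, 0 < V y)
    (hV_atTop : Tendsto V (cocompact X) atTop) (hVx : Tendsto (fun i => V (x i)) l (𝓝 0)) :
    Tendsto x l (𝓝 x₀) := by
  refine tendsto_nhds.2 fun U hU hx₀U => ?_
  have hK : IsCompact (V ⁻¹' Iic 1 ∩ Uᶜ) :=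
    (isCompact_preimage_Iic_of_tendsto_cocompact_atTop hV hV_atTop 1).inter_right
      hU.isClosed_compl
  obtain ⟨c, hc, hcV⟩ := hK.exists_forall_le' hV.continuousOn fun y hy =>
    hV_pos y (ne_of_mem_of_not_mem hx₀U hy.2).symm
  filter_upwards [hVx.eventually_lt_const hc, hVx.eventually_le_const one_pos] with i hic hi1
  by_contra hiU
  exact hic.not_ge (hcV (x i) ⟨hi1, hiU⟩)

theorem exists_pos_forall_le_of_mem_shell {V W : X → ℝ} {x₀ : X} {ε : ℝ} (hV : Continuous V)
    (hε : V x₀ < ε) (hV_atTop : Tendsto V (cocompact X) atTop) (hW : ContinuousOn W {x₀}ᶜ)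
    (hW_pos : ∀ y ≠ x₀, 0 < W y) (M : ℝ) :
    ∃ c > 0, ∀ y, ε ≤ V y → V y ≤ M → c ≤ W y := by
  have hK : IsCompact (V ⁻¹' Iic M ∩ V ⁻¹' Ici ε) :=
    (isCompact_preimage_Iic_of_tendsto_cocompact_atTop hV hV_atTop M).inter_right
      (isClosed_Ici.preimage hV)
  have hne : ∀ y ∈ V ⁻¹' Iic M ∩ V ⁻¹' Ici ε, y ≠ x₀ := by
    rintro y ⟨-, hy⟩ rfl
    exact hε.not_ge hy
  obtain ⟨c, hc, hcW⟩ := hK.exists_forall_le' (hW.mono hne) fun y hy => hW_pos y (hne y hy)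
  exact ⟨c, hc, fun y hεy hyM => hcW y ⟨hyM, hεy⟩⟩

end Coercive

section ScalarDecay

open Set Topology

variable {φ φ' : ℝ → ℝ} {a : ℝ}

theorem antitoneOn_Ici_of_hasDerivAt_nonpos (hφ : ∀ t, a ≤ t → HasDerivAt φ (φ' t) t)
    (hφ' : ∀ t, a ≤ t → φ' t ≤ 0) : AntitoneOn φ (Ici a) :=
  antitoneOn_of_hasDerivWithinAt_nonpos (convex_Ici a)
    (fun t ht => (hφ t ht).continuousAt.continuousWithinAt)
    (fun t ht => (hφ t (interior_subset ht)).hasDerivWithinAt)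
    fun t ht => hφ' t (interior_subset ht)

theorem tendsto_atBot_of_hasDerivAt_le_neg {c : ℝ} (hc : 0 < c)
    (hφ : ∀ t, a ≤ t → HasDerivAt φ (φ' t) t) (hφ' : ∀ t, a ≤ t → φ' t ≤ -c) :
    Tendsto φ atTop atBot := by
  have hanti : AntitoneOn (fun t => φ t + c * t) (Ici a) :=
    antitoneOn_Ici_of_hasDerivAt_nonpos
      (fun t ht => (hφ t ht).add ((hasDerivAt_id t).const_mul c))
      fun t ht => by linarith [hφ' t ht]
  have hlinear : Tendsto (fun t => φ a + c * a + -c * t) atTop atBot :=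
    tendsto_atBot_add_const_left _ _ (tendsto_id.const_mul_atTop_of_neg (neg_neg_of_pos hc))
  refine tendsto_atBot_mono' _ ?_ hlinear
  filter_upwards [eventually_ge_atTop a] with t ht
  have hle : φ t + c * t ≤ φ a + c * a := hanti self_mem_Ici ht ht
  linarith

theorem tendsto_zero_of_hasDerivAt_le_neg_of_le (hφ : ∀ t, a ≤ t → HasDerivAt φ (φ' t) t)
    (hφ_nonneg : ∀ t, a ≤ t → 0 ≤ φ t) (hφ_anti : AntitoneOn φ (Ici a))
    (hdecay : ∀ ε > 0, ∃ c > 0, ∀ t, a ≤ t → ε ≤ φ t → φ' t ≤ -c) :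
    Tendsto φ atTop (𝓝 0) := by
  have hsmall : ∀ ε > 0, ∃ T, a ≤ T ∧ φ T < ε := by
    intro ε hε
    by_contra! hlarge
    obtain ⟨c, hc, hφ'⟩ := hdecay ε hε
    have hbot : Tendsto φ atTop atBot :=
      tendsto_atBot_of_hasDerivAt_le_neg hc hφ fun t ht => hφ' t ht (hlarge t ht)
    obtain ⟨t, htε, hat⟩ := ((hbot.eventually_lt_atBot ε).and (eventually_ge_atTop a)).exists
    exact htε.not_ge (hlarge t hat)
  refine tendsto_order.2 ⟨fun b hb => ?_, fun ε hε => ?_⟩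
  · filter_upwards [eventually_ge_atTop a] with t ht using hb.trans_le (hφ_nonneg t ht)
  · obtain ⟨T, haT, hT⟩ := hsmall ε hε
    filter_upwards [eventually_ge_atTop T] with t ht
    exact (hφ_anti haT (haT.trans ht) ht).trans_lt hT

end ScalarDecay

theorem od_clf_zero_slack_convergence_general
    {E : Type*} [NormedAddCommGroup E] [NormedSpace ℝ E] {V W : E → ℝ}
    (hV : Differentiable ℝ V) (hV0 : V 0 = 0) (hV_pos : ∀ y ≠ 0, 0 < V y)
    (hV_atTop : Tendsto V (cocompact E) atTop)
    (hW : ContinuousOn W {0}ᶜ) (hW_pos : ∀ y ≠ 0, 0 < W y)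
    {ρ₀ : ℝ} (hρ₀ : 0 < ρ₀) {x v : ℝ → E} (hx : ∀ t, 0 ≤ t → HasDerivAt x (v t) t)
    (hCLF : ∀ t, 0 ≤ t → fderiv ℝ V (x t) (v t) ≤ -ρ₀ * W (x t)) :
    Tendsto x atTop (nhds 0) := by
  have hV_nonneg (y : E) : 0 ≤ V y := by
    rcases eq_or_ne y 0 with rfl | hy
    exacts [hV0.ge, (hV_pos y hy).le]
  have hVx (t : ℝ) (ht : 0 ≤ t) :
      HasDerivAt (fun s => V (x s)) (fderiv ℝ V (x t) (v t)) t :=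
    (hV (x t)).hasFDerivAt.comp_hasDerivAt t (hx t ht)
  have hVx_nonpos (t : ℝ) (ht : 0 ≤ t) : fderiv ℝ V (x t) (v t) ≤ 0 := by
    rcases eq_or_ne (x t) 0 with hxt | hxt
    · have hmin : IsLocalMin V 0 := .of_forall fun y => hV0.trans_le (hV_nonneg y)
      simp only [hxt, hmin.fderiv_eq_zero, _root_.zero_apply, le_refl]
    · exact (hCLF t ht).trans <|
        mul_nonpos_of_nonpos_of_nonneg (neg_nonpos.2 hρ₀.le) (hW_pos (x t) hxt).le
  have hVx_anti := antitoneOn_Ici_of_hasDerivAt_nonpos hVx hVx_nonpos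
  refine tendsto_nhds_of_tendsto_comp_nhds_zero hV.continuous hV_pos hV_atTop
    (tendsto_zero_of_hasDerivAt_le_neg_of_le hVx (fun t _ => hV_nonneg (x t)) hVx_anti
      fun ε hε => ?_)
  obtain ⟨c, hc, hcW⟩ := exists_pos_forall_le_of_mem_shell hV.continuous (hV0.trans_lt hε)
    hV_atTop hW hW_pos (V (x 0))
  refine ⟨ρ₀ * c, mul_pos hρ₀ hc, fun t ht hεt => (hCLF t ht).trans ?_⟩
  have hcWt : c ≤ W (x t) := hcW (x t) hεt (hVx_anti Set.self_mem_Ici ht ht)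
  linarith [mul_le_mul_of_nonneg_left hcWt hρ₀.le]

/-- **Convergence under the optimal-decay CLF constraint with zero slack.**
If along the trajectory the optimal-decay CLF inequality
`∇V(x(t))ᵀ(f(x(t)) + g(x(t))u(t)) ≤ −ρ₀ W(x(t))` holds with a fixed
`ρ₀ > 0` (slack `δ = 0`, decay weight `ρ ≥ ρ₀`), then the state converges
to the origin. -/
theorem od_clf_zero_slack_convergence
    {n m : ℕ}
    (f : (Fin n → ℝ) → (Fin n → ℝ))
    (g : (Fin n → ℝ) → Matrix (Fin n) (Fin m) ℝ)
    (hf : LocallyLipschitz f) (hg : LocallyLipschitz g)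
    (V : (Fin n → ℝ) → ℝ)
    (hV_smooth : ContDiff ℝ 1 V)
    (hV0 : V 0 = 0)
    (hVpos : ∀ x : Fin n → ℝ, x ≠ 0 → 0 < V x)
    (hVrad : ∀ M : ℝ, ∃ r : ℝ, ∀ x : Fin n → ℝ, r ≤ ‖x‖ → M ≤ V x)
    (W : (Fin n → ℝ) → ℝ)
    (hW_cont : Continuous W)
    (hW0 : W 0 = 0)
    (hWpos : ∀ x : Fin n → ℝ, x ≠ 0 → 0 < W x)
    (ρ₀ : ℝ) (hρ₀ : 0 < ρ₀)
    (u : ℝ → (Fin m → ℝ)) (hu : Continuous u)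
    (x : ℝ → (Fin n → ℝ))
    (hx : ∀ t : ℝ, 0 ≤ t →
      HasDerivAt x (f (x t) + g (x t) *ᵥ u t) t)
    (hCLF : ∀ t : ℝ, 0 ≤ t →
      fderiv ℝ V (x t) (f (x t) + g (x t) *ᵥ u t) ≤ -ρ₀ * W (x t)) :
    Tendsto x atTop (nhds 0) :=
  od_clf_zero_slack_convergence_general (hV_smooth.differentiable one_ne_zero) hV0 hVpos
    ((tendsto_cobounded_atTop_of_forall_norm_le hVrad).mono_left
      Metric.cobounded_eq_cocompact.ge)
    hW_cont.continuousOn hWpos hρ₀ hx hCLF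
end
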